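/- Let d ≥ 1, ℓ ∈ ℕ with ℓ ≥ 1, and β satisfy (ℓ−1)d/(2ℓ) < β < d/2. Then for every n ∈ ℤ^d, ∑_{n = n₁ + ⋯ + n_ℓ} ∏_{j=1}^ℓ ⟨n_j⟩^{−2β} ≲ ⟨n⟩^{−d − 2ℓ(β − d/2)}, where the sum is over all (n₁, …, n_ℓ) ∈ (ℤ^d)^ℓ with n₁ + ⋯ + n_ℓ = n. -/

import Mathlib

/-- Japanese bracket of a lattice point. -/
noncomputable def jbZ {d : ℕ} (n : Fin d → ℤ) : ℝ :=
  Real.sqrt (1 + ∑ i, ((n i : ℝ)) ^ 2)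

/-!
The only features of `⟨·⟩` that matter are its subadditivity and the growth
`#{m | ⟨m⟩ ≤ r} ≲ r ^ d`. Summing over dyadic shells, the growth gives
`∑_{⟨m⟩ ≤ R} ⟨m⟩ ^ (-a) ≲ R ^ (d - a)` if `a < d` and `∑_{⟨m⟩ ≥ R} ⟨m⟩ ^ (-a) ≲ R ^ (d - a)` if
`a > d`. In the convolution of `⟨·⟩ ^ (-a)` and `⟨·⟩ ^ (-b)` at `n` we may assume
`⟨m⟩ ≤ ⟨n - m⟩`, up to exchanging the two factors; then `⟨n - m⟩ ≥ ⟨n⟩ / 2`, and the two estimates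
above, applied to the terms with `⟨m⟩ ≤ ⟨n⟩` and with `⟨m⟩ ≥ ⟨n⟩`, bound the sum by a multiple of
`⟨n⟩ ^ (d - a - b)`. Each further convolution with `⟨·⟩ ^ (-a)` thus lowers the decay exponent by
`d - a`.
-/

open Set
open scoped ENNReal NNReal

section PowerSums

variable {X : Type*} {w : X → ℝ} {D a : ℝ}

/-- A weight `w` has growth exponent at most `D` if its sublevel sets satisfy
`#{x | w x ≤ r} ≲ r ^ D`. The exponent is real, and the bound is required for all `r > 0`, not
only for large `r`. -/
def HasGrowthExponent (w : X → ℝ) (D : ℝ) : Prop :=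
  ∃ K : ℝ≥0, ∀ r : ℝ, 0 < r → ((w ⁻¹' Iic r).encard : ℝ≥0∞) ≤ K * ENNReal.ofReal (r ^ D)

lemma rpow_le_two_rpow_abs_mul_rpow {x r : ℝ} (hr : 0 < r) (hx : x ∈ Icc (r / 2) r) (s : ℝ) :
    x ^ s ≤ 2 ^ |s| * r ^ s := by
  have hx0 : 0 < x := (half_pos hr).trans_le hx.1
  have hratio : 1 ≤ r / x := (one_le_div hx0).2 hx.2
  calc x ^ s = (r / x) ^ (-s) * r ^ s := by
        rw [Real.rpow_neg (by positivity), Real.div_rpow hr.le hx0.le, inv_div,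
          div_mul_cancel₀ _ (by positivity)]
    _ ≤ (r / x) ^ |s| * r ^ s := by
        gcongr
        exact neg_le_abs s
    _ ≤ 2 ^ |s| * r ^ s := by
        gcongr
        rw [div_le_iff₀ hx0]
        linarith [hx.1]

lemma HasGrowthExponent.exists_tsum_shell_le (hw : HasGrowthExponent w D) (a : ℝ) :
    ∃ C : ℝ≥0, ∀ r : ℝ, 0 < r →
      ∑' x : w ⁻¹' Icc (r / 2) r, ENNReal.ofReal (w x ^ (-a))
        ≤ C * ENNReal.ofReal (r ^ (D - a)) := by
  obtain ⟨K, hK⟩ := hw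
  refine ⟨K * (2 ^ |a| : ℝ).toNNReal, fun r hr => ?_⟩
  calc ∑' x : w ⁻¹' Icc (r / 2) r, ENNReal.ofReal (w x ^ (-a))
      ≤ ∑' _ : w ⁻¹' Icc (r / 2) r, ENNReal.ofReal (2 ^ |a| * r ^ (-a)) := by
        refine ENNReal.tsum_le_tsum fun x => ENNReal.ofReal_le_ofReal ?_
        simpa only [abs_neg] using rpow_le_two_rpow_abs_mul_rpow hr x.2 (-a)
    _ ≤ K * ENNReal.ofReal (r ^ D) * ENNReal.ofReal (2 ^ |a| * r ^ (-a)) := by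
        rw [ENNReal.tsum_set_const]
        gcongr
        exact le_trans (by gcongr; exact Icc_subset_Iic_self) (hK r hr)
    _ = (K * (2 ^ |a| : ℝ).toNNReal : ℝ≥0) * ENNReal.ofReal (r ^ (D - a)) := by
        rw [sub_eq_add_neg, Real.rpow_add hr, ENNReal.ofReal_mul (by positivity),
          ENNReal.ofReal_mul (by positivity), ENNReal.coe_mul, ENNReal.ofNNReal_toNNReal]
        ring

lemma HasGrowthExponent.exists_tsum_iUnion_shell_le (hw : HasGrowthExponent w D) {q : ℝ}
    (hq : 0 < q) (hqa : q ^ (D - a) < 1) :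
    ∃ C : ℝ≥0, ∀ r : ℝ, 0 < r →
      ∑' x : ⋃ k : ℕ, w ⁻¹' Icc (q ^ k * r / 2) (q ^ k * r), ENNReal.ofReal (w x ^ (-a))
        ≤ C * ENNReal.ofReal (r ^ (D - a)) := by
  obtain ⟨C, hC⟩ := hw.exists_tsum_shell_le a
  set ρ : ℝ≥0∞ := ENNReal.ofReal (q ^ (D - a))
  have hgeom : ∑' k : ℕ, ρ ^ k ≠ ∞ := by
    rw [ENNReal.tsum_geometric]
    exact ENNReal.inv_ne_top.2 (tsub_pos_of_lt (ENNReal.ofReal_lt_one.2 hqa)).ne'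
  lift ∑' k : ℕ, ρ ^ k to ℝ≥0 using hgeom with G hG
  refine ⟨C * G, fun r hr => ?_⟩
  have hscale (k : ℕ) :
      ENNReal.ofReal ((q ^ k * r) ^ (D - a)) = ρ ^ k * ENNReal.ofReal (r ^ (D - a)) := by
    rw [Real.mul_rpow (by positivity) hr.le, ← Real.rpow_pow_comm hq.le,
      ENNReal.ofReal_mul (by positivity), ENNReal.ofReal_pow (by positivity)]
  calc ∑' x : ⋃ k : ℕ, w ⁻¹' Icc (q ^ k * r / 2) (q ^ k * r), ENNReal.ofReal (w x ^ (-a))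
      ≤ ∑' (k : ℕ) (x : w ⁻¹' Icc (q ^ k * r / 2) (q ^ k * r)), ENNReal.ofReal (w x ^ (-a)) :=
        ENNReal.tsum_iUnion_le_tsum (fun x => ENNReal.ofReal (w x ^ (-a))) _
    _ ≤ ∑' k : ℕ, C * (ρ ^ k * ENNReal.ofReal (r ^ (D - a))) :=
        ENNReal.tsum_le_tsum fun k => hscale k ▸ hC (q ^ k * r) (by positivity)
    _ = (C * G : ℝ≥0) * ENNReal.ofReal (r ^ (D - a)) := by
        rw [ENNReal.tsum_mul_left, ENNReal.tsum_mul_right, ← hG, ENNReal.coe_mul, mul_assoc]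

lemma HasGrowthExponent.exists_tsum_Iic_le (hw : HasGrowthExponent w D) (hpos : ∀ x, 0 < w x)
    (ha : a < D) :
    ∃ C : ℝ≥0, ∀ R : ℝ, 0 < R →
      ∑' x : w ⁻¹' Iic R, ENNReal.ofReal (w x ^ (-a)) ≤ C * ENNReal.ofReal (R ^ (D - a)) := by
  obtain ⟨C, hC⟩ := hw.exists_tsum_iUnion_shell_le (a := a) one_half_pos
    (Real.rpow_lt_one one_half_pos.le one_half_lt_one (sub_pos.2 ha))
  refine ⟨C, fun R hR => le_trans ?_ (hC R hR)⟩
  refine ENNReal.tsum_mono_subtype (fun x => ENNReal.ofReal (w x ^ (-a))) fun x hx => ?_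
  obtain ⟨k, hlower, hupper⟩ := exists_nat_pow_near_of_lt_one (div_pos (hpos x) hR)
    ((div_le_one hR).2 hx) one_half_pos one_half_lt_one
  rw [lt_div_iff₀ hR, pow_succ] at hlower
  exact mem_iUnion.2 ⟨k, by linarith, (div_le_iff₀ hR).1 hupper⟩

lemma HasGrowthExponent.exists_tsum_Ici_le (hw : HasGrowthExponent w D) (ha : D < a) :
    ∃ C : ℝ≥0, ∀ R : ℝ, 0 < R →
      ∑' x : w ⁻¹' Ici R, ENNReal.ofReal (w x ^ (-a)) ≤ C * ENNReal.ofReal (R ^ (D - a)) := by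
  obtain ⟨C, hC⟩ := hw.exists_tsum_iUnion_shell_le (a := a) two_pos
    (Real.rpow_lt_one_of_one_lt_of_neg one_lt_two (sub_neg.2 ha))
  refine ⟨C, fun R hR => ?_⟩
  calc ∑' x : w ⁻¹' Ici R, ENNReal.ofReal (w x ^ (-a))
      ≤ ∑' x : ⋃ k : ℕ, w ⁻¹' Icc (2 ^ k * (2 * R) / 2) (2 ^ k * (2 * R)),
          ENNReal.ofReal (w x ^ (-a)) := by
        refine ENNReal.tsum_mono_subtype (fun x => ENNReal.ofReal (w x ^ (-a))) fun x hx => ?_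
        obtain ⟨k, hlower, hupper⟩ := exists_nat_pow_near ((one_le_div hR).2 hx) one_lt_two
        rw [le_div_iff₀ hR] at hlower
        rw [div_lt_iff₀ hR, pow_succ] at hupper
        exact mem_iUnion.2 ⟨k, by linarith, by linarith⟩
    _ ≤ C * ENNReal.ofReal ((2 * R) ^ (D - a)) := hC (2 * R) (by positivity)
    _ ≤ C * ENNReal.ofReal (R ^ (D - a)) := by
        gcongr _ * ENNReal.ofReal ?_
        exact Real.rpow_le_rpow_of_nonpos hR (by linarith) (by linarith)

end PowerSums

section Convolution

variable {G : Type*} {w : G → ℝ} {D a b : ℝ}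

lemma exists_tsum_convolution_near_le [AddGroup G] (hw : HasGrowthExponent w D)
    (hpos : ∀ x, 0 < w x) (hadd : ∀ x y, w (x + y) ≤ w x + w y) (ha : a < D) (hb : 0 ≤ b) :
    ∃ C : ℝ≥0, ∀ n : G,
      ∑' m : {m | w m ≤ w (n - m) ∧ w m ≤ w n},
          ENNReal.ofReal (w m ^ (-a)) * ENNReal.ofReal (w (n - m) ^ (-b))
        ≤ C * ENNReal.ofReal (w n ^ (D - a - b)) := by
  obtain ⟨C, hC⟩ := hw.exists_tsum_Iic_le hpos ha
  refine ⟨(2 ^ b : ℝ).toNNReal * C, fun n => ?_⟩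
  have hfar (m : G) (hm : w m ≤ w (n - m)) : w (n - m) ^ (-b) ≤ 2 ^ b * w n ^ (-b) := by
    have hn : w n / 2 ≤ w (n - m) := by
      have := hadd (n - m) m
      rw [sub_add_cancel] at this
      linarith
    calc w (n - m) ^ (-b) ≤ (w n / 2) ^ (-b) :=
          Real.rpow_le_rpow_of_nonpos (half_pos (hpos n)) hn (neg_nonpos.2 hb)
      _ = 2 ^ b * w n ^ (-b) := by
          rw [Real.div_rpow (hpos n).le zero_le_two, Real.rpow_neg zero_le_two, div_inv_eq_mul,
            mul_comm]
  calc ∑' m : {m | w m ≤ w (n - m) ∧ w m ≤ w n},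
          ENNReal.ofReal (w m ^ (-a)) * ENNReal.ofReal (w (n - m) ^ (-b))
      ≤ ∑' m : {m | w m ≤ w (n - m) ∧ w m ≤ w n},
          ENNReal.ofReal (w m ^ (-a)) * ENNReal.ofReal (2 ^ b * w n ^ (-b)) := by
        gcongr with m
        exact hfar m m.2.1
    _ ≤ ∑' m : w ⁻¹' Iic (w n),
          ENNReal.ofReal (w m ^ (-a)) * ENNReal.ofReal (2 ^ b * w n ^ (-b)) :=
        ENNReal.tsum_mono_subtype
          (fun m => ENNReal.ofReal (w m ^ (-a)) * ENNReal.ofReal (2 ^ b * w n ^ (-b)))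
          fun _ hm => hm.2
    _ ≤ C * ENNReal.ofReal (w n ^ (D - a)) * ENNReal.ofReal (2 ^ b * w n ^ (-b)) := by
        rw [ENNReal.tsum_mul_right]
        gcongr
        exact hC (w n) (hpos n)
    _ = ((2 ^ b : ℝ).toNNReal * C : ℝ≥0) * ENNReal.ofReal (w n ^ (D - a - b)) := by
        have hwn := hpos n
        rw [sub_eq_add_neg _ b, Real.rpow_add hwn, ENNReal.ofReal_mul (by positivity),
          ENNReal.ofReal_mul (by positivity), ENNReal.coe_mul, ENNReal.ofNNReal_toNNReal]
        ring

lemma exists_tsum_convolution_far_le [AddGroup G] (hw : HasGrowthExponent w D)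
    (hpos : ∀ x, 0 < w x) (hb : 0 ≤ b) (hab : D < a + b) :
    ∃ C : ℝ≥0, ∀ n : G,
      ∑' m : {m | w m ≤ w (n - m) ∧ w n ≤ w m},
          ENNReal.ofReal (w m ^ (-a)) * ENNReal.ofReal (w (n - m) ^ (-b))
        ≤ C * ENNReal.ofReal (w n ^ (D - a - b)) := by
  obtain ⟨C, hC⟩ := hw.exists_tsum_Ici_le hab
  refine ⟨C, fun n => ?_⟩
  calc ∑' m : {m | w m ≤ w (n - m) ∧ w n ≤ w m},
          ENNReal.ofReal (w m ^ (-a)) * ENNReal.ofReal (w (n - m) ^ (-b))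
      ≤ ∑' m : {m | w m ≤ w (n - m) ∧ w n ≤ w m}, ENNReal.ofReal (w m ^ (-(a + b))) := by
        refine ENNReal.tsum_le_tsum fun m => ?_
        have hm := hpos m
        rw [← ENNReal.ofReal_mul (by positivity), neg_add, Real.rpow_add hm]
        gcongr ENNReal.ofReal (_ * ?_)
        exact Real.rpow_le_rpow_of_nonpos hm m.2.1 (neg_nonpos.2 hb)
    _ ≤ ∑' m : w ⁻¹' Ici (w n), ENNReal.ofReal (w m ^ (-(a + b))) :=
        ENNReal.tsum_mono_subtype (fun m => ENNReal.ofReal (w m ^ (-(a + b)))) fun _ hm => hm.2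
    _ ≤ C * ENNReal.ofReal (w n ^ (D - a - b)) := by
        rw [sub_sub]
        exact hC (w n) (hpos n)

lemma exists_tsum_convolution_half_le [AddGroup G] (hw : HasGrowthExponent w D)
    (hpos : ∀ x, 0 < w x) (hadd : ∀ x y, w (x + y) ≤ w x + w y) (ha : a < D) (hab : D < a + b) :
    ∃ C : ℝ≥0, ∀ n : G,
      ∑' m : {m | w m ≤ w (n - m)},
          ENNReal.ofReal (w m ^ (-a)) * ENNReal.ofReal (w (n - m) ^ (-b))
        ≤ C * ENNReal.ofReal (w n ^ (D - a - b)) := by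
  have hb : 0 ≤ b := by linarith
  obtain ⟨A, hA⟩ := exists_tsum_convolution_near_le hw hpos hadd ha hb
  obtain ⟨B, hB⟩ := exists_tsum_convolution_far_le hw hpos hb hab
  refine ⟨A + B, fun n => ?_⟩
  let f (m : G) := ENNReal.ofReal (w m ^ (-a)) * ENNReal.ofReal (w (n - m) ^ (-b))
  calc ∑' m : {m | w m ≤ w (n - m)}, f m
      ≤ ∑' m : ({m | w m ≤ w (n - m) ∧ w m ≤ w n} ∪ {m | w m ≤ w (n - m) ∧ w n ≤ w m} : Set G),
          f m :=
        ENNReal.tsum_mono_subtype f fun m hm =>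
          (le_total (w m) (w n)).imp (And.intro hm) (And.intro hm)
    _ ≤ A * ENNReal.ofReal (w n ^ (D - a - b)) + B * ENNReal.ofReal (w n ^ (D - a - b)) :=
        (ENNReal.tsum_union_le f _ _).trans (add_le_add (hA n) (hB n))
    _ = (A + B : ℝ≥0) * ENNReal.ofReal (w n ^ (D - a - b)) := by
        rw [ENNReal.coe_add, add_mul]

lemma tsum_convolution_le_add_swap [AddCommGroup G] {α : Type*} [LinearOrder α] (w : G → α)
    (f g : G → ℝ≥0∞) (n : G) :
    ∑' m : G, f m * g (n - m) ≤
      ∑' m : {m | w m ≤ w (n - m)}, f m * g (n - m) +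
        ∑' m : {m | w m ≤ w (n - m)}, g m * f (n - m) := by
  have hswap : ∑' m : {m | w (n - m) ≤ w m}, f m * g (n - m) =
      ∑' m : {m | w m ≤ w (n - m)}, g m * f (n - m) := by
    rw [← ((Equiv.subLeft n).subtypeEquiv fun m => by simp :
      {m | w m ≤ w (n - m)} ≃ {m | w (n - m) ≤ w m}).tsum_eq]
    refine tsum_congr fun m => ?_
    simp [mul_comm]
  calc ∑' m : G, f m * g (n - m)
      = ∑' m : ({m | w m ≤ w (n - m)} ∪ {m | w (n - m) ≤ w m} : Set G), f m * g (n - m) := by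
        rw [eq_univ_of_forall (s := {m | w m ≤ w (n - m)} ∪ {m | w (n - m) ≤ w m})
          fun m => le_total (w m) (w (n - m)), tsum_univ fun m => f m * g (n - m)]
    _ ≤ _ := hswap ▸ ENNReal.tsum_union_le (fun m => f m * g (n - m)) _ _

lemma exists_tsum_convolution_le [AddCommGroup G] (hw : HasGrowthExponent w D)
    (hpos : ∀ x, 0 < w x) (hadd : ∀ x y, w (x + y) ≤ w x + w y) (ha : a < D) (hb : b < D)
    (hab : D < a + b) :
    ∃ C : ℝ≥0, ∀ n : G,
      ∑' m : G, ENNReal.ofReal (w m ^ (-a)) * ENNReal.ofReal (w (n - m) ^ (-b))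
        ≤ C * ENNReal.ofReal (w n ^ (D - a - b)) := by
  obtain ⟨A, hA⟩ := exists_tsum_convolution_half_le hw hpos hadd ha hab
  obtain ⟨B, hB⟩ := exists_tsum_convolution_half_le hw hpos hadd hb (add_comm a b ▸ hab)
  refine ⟨A + B, fun n => ?_⟩
  rw [ENNReal.coe_add, add_mul]
  refine (tsum_convolution_le_add_swap w (fun m => ENNReal.ofReal (w m ^ (-a)))
    (fun m => ENNReal.ofReal (w m ^ (-b))) n).trans (add_le_add (hA n) ?_)
  rw [sub_right_comm]
  exact hB n

lemma tsum_prod_fin_succ_eq_tsum_mul [AddCommGroup G] [DecidableEq G] (f : G → ℝ≥0∞) (l : ℕ)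
    (n : G) :
    ∑' v : Fin (l + 1) → G, (if ∑ j, v j = n then ∏ j, f (v j) else 0) =
      ∑' m : G, f m * ∑' v : Fin l → G, (if ∑ j, v j = n - m then ∏ j, f (v j) else 0) := by
  rw [← (Fin.consEquiv fun _ : Fin (l + 1) => G).tsum_eq, ENNReal.tsum_prod']
  refine tsum_congr fun m => ?_
  rw [← ENNReal.tsum_mul_left]
  refine tsum_congr fun v => ?_
  simp [Fin.consEquiv, Fin.sum_univ_succ, Fin.prod_univ_succ, eq_sub_iff_add_eq, add_comm m]

lemma exists_tsum_iterated_convolution_le [AddCommGroup G] [DecidableEq G]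
    (hw : HasGrowthExponent w D) (hpos : ∀ x, 0 < w x) (hadd : ∀ x y, w (x + y) ≤ w x + w y)
    (ha : a < D) {l : ℕ} (hl : 1 ≤ l) (hlD : l * (D - a) < D) :
    ∃ C : ℝ≥0, ∀ n : G,
      ∑' v : Fin l → G, (if ∑ j, v j = n then ∏ j, ENNReal.ofReal (w (v j) ^ (-a)) else 0)
        ≤ C * ENNReal.ofReal (w n ^ (-(D - l * (D - a)))) := by
  induction l, hl using Nat.le_induction with
  | base =>
    refine ⟨1, fun n => ?_⟩
    rw [← (Equiv.funUnique (Fin 1) G).symm.tsum_eq]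
    simp
  | succ l hl ih =>
    rw [Nat.cast_add_one] at hlD
    have hl' : 0 < (l : ℝ) := by exact_mod_cast hl
    have hstep : 0 < l * (D - a) := mul_pos hl' (sub_pos.2 ha)
    obtain ⟨C, hC⟩ := ih (by linarith)
    obtain ⟨K, hK⟩ := exists_tsum_convolution_le (b := D - l * (D - a)) hw hpos hadd ha
      (by linarith) (by linarith)
    refine ⟨C * K, fun n => ?_⟩
    calc ∑' v : Fin (l + 1) → G,
            (if ∑ j, v j = n then ∏ j, ENNReal.ofReal (w (v j) ^ (-a)) else 0)
        ≤ ∑' m : G, ENNReal.ofReal (w m ^ (-a)) *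
            (C * ENNReal.ofReal (w (n - m) ^ (-(D - l * (D - a))))) := by
          rw [tsum_prod_fin_succ_eq_tsum_mul fun m => ENNReal.ofReal (w m ^ (-a))]
          gcongr with m
          exact hC (n - m)
      _ ≤ C * (K * ENNReal.ofReal (w n ^ (D - a - (D - l * (D - a))))) := by
          simp_rw [mul_left_comm _ (C : ℝ≥0∞)]
          rw [ENNReal.tsum_mul_left]
          gcongr
          exact hK n
      _ = (C * K : ℝ≥0) * ENNReal.ofReal (w n ^ (-(D - (l + 1 : ℕ) * (D - a)))) := by
          rw [ENNReal.coe_mul, mul_assoc]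
          congr 5
          push_cast
          ring

lemma summable_and_tsum_le_of_tsum_ofReal_le {X : Type*} {f : X → ℝ} {c : ℝ} (hf : 0 ≤ f)
    (hc : 0 ≤ c) (h : ∑' x, ENNReal.ofReal (f x) ≤ ENNReal.ofReal c) :
    Summable f ∧ ∑' x, f x ≤ c := by
  have hsum (s : Finset X) : ∑ x ∈ s, f x ≤ c := by
    rw [← ENNReal.ofReal_le_ofReal_iff hc, ENNReal.ofReal_sum_of_nonneg fun x _ => hf x]
    exact (ENNReal.sum_le_tsum s).trans h
  exact ⟨summable_of_sum_le hf hsum, Real.tsum_le_of_sum_le hf hsum⟩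

theorem iterated_convolution_bound_general [AddCommGroup G] [DecidableEq G]
    (hw : HasGrowthExponent w D) (hpos : ∀ x, 0 < w x) (hadd : ∀ x y, w (x + y) ≤ w x + w y)
    {l : ℕ} (hl : 1 ≤ l) {β : ℝ} (h1 : ((l : ℝ) - 1) * D / (2 * l) < β) (h2 : β < D / 2) :
    ∃ C > 0, ∀ n : G,
      Summable (fun v : Fin l → G => if ∑ j, v j = n then ∏ j, w (v j) ^ (-(2 * β)) else 0) ∧
        ∑' v : Fin l → G, (if ∑ j, v j = n then ∏ j, w (v j) ^ (-(2 * β)) else 0)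
          ≤ C * w n ^ (-D - 2 * l * (β - D / 2)) := by
  have hl' : (0 : ℝ) < l := by exact_mod_cast hl
  rw [div_lt_iff₀ (by positivity)] at h1
  obtain ⟨C, hC⟩ := exists_tsum_iterated_convolution_le (a := 2 * β) hw hpos hadd (by linarith) hl
    (by linarith)
  have hrpow (x : G) (s : ℝ) : 0 ≤ w x ^ s := Real.rpow_nonneg (hpos x).le s
  refine ⟨C + 1, by positivity, fun n => summable_and_tsum_le_of_tsum_ofReal_le
    (fun v => ?_) (mul_nonneg (by positivity) (hrpow n _)) ?_⟩
  · exact ite_nonneg (Finset.prod_nonneg fun j _ => hrpow (v j) _) le_rfl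
  · simp_rw [apply_ite ENNReal.ofReal, ENNReal.ofReal_zero,
      ENNReal.ofReal_prod_of_nonneg fun _ _ => hrpow _ _]
    calc _ ≤ C * ENNReal.ofReal (w n ^ (-(D - l * (D - 2 * β)))) := hC n
      _ ≤ ENNReal.ofReal ((C + 1) * w n ^ (-D - 2 * l * (β - D / 2))) := by
        rw [ENNReal.ofReal_mul (by positivity), ← ENNReal.ofReal_coe_nnreal,
          show -(D - l * (D - 2 * β)) = -D - 2 * l * (β - D / 2) by ring]
        gcongr
        linarith

end Convolution

section JapaneseBracket

variable {d : ℕ}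

lemma jbZ_eq_sqrt_one_add_norm_sq (n : Fin d → ℤ) :
    jbZ n = √(1 + ‖WithLp.toLp 2 fun i => (n i : ℝ)‖ ^ 2) := by
  simp [jbZ, EuclideanSpace.norm_sq_eq]

lemma one_le_jbZ (n : Fin d → ℤ) : 1 ≤ jbZ n := by
  rw [jbZ_eq_sqrt_one_add_norm_sq, Real.one_le_sqrt]
  exact le_add_of_nonneg_right (sq_nonneg _)

lemma abs_apply_le_jbZ (n : Fin d → ℤ) (i : Fin d) : |(n i : ℝ)| ≤ jbZ n :=
  calc |(n i : ℝ)| ≤ ‖WithLp.toLp 2 fun i => (n i : ℝ)‖ :=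
        PiLp.norm_apply_le (WithLp.toLp 2 fun i => (n i : ℝ)) i
    _ ≤ jbZ n := by
        rw [jbZ_eq_sqrt_one_add_norm_sq]
        exact Real.le_sqrt_of_sq_le (le_add_of_nonneg_left zero_le_one)

lemma sqrt_one_add_norm_add_sq_le {E : Type*} [SeminormedAddCommGroup E] (x y : E) :
    √(1 + ‖x + y‖ ^ 2) ≤ √(1 + ‖x‖ ^ 2) + √(1 + ‖y‖ ^ 2) := by
  have hle (z : E) : ‖z‖ ≤ √(1 + ‖z‖ ^ 2) :=
    Real.le_sqrt_of_sq_le (le_add_of_nonneg_left zero_le_one)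
  have hcross : ‖x‖ * ‖y‖ ≤ √(1 + ‖x‖ ^ 2) * √(1 + ‖y‖ ^ 2) := by gcongr <;> exact hle _
  refine Real.sqrt_le_iff.2 ⟨by positivity, ?_⟩
  calc 1 + ‖x + y‖ ^ 2 ≤ 1 + (‖x‖ + ‖y‖) ^ 2 := by gcongr; exact norm_add_le x y
    _ ≤ (1 + ‖x‖ ^ 2) + 2 * (√(1 + ‖x‖ ^ 2) * √(1 + ‖y‖ ^ 2)) + (1 + ‖y‖ ^ 2) := by linarith
    _ = (√(1 + ‖x‖ ^ 2) + √(1 + ‖y‖ ^ 2)) ^ 2 := by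
        rw [add_sq, Real.sq_sqrt (by positivity), Real.sq_sqrt (by positivity), mul_assoc]

lemma jbZ_add_le (m n : Fin d → ℤ) : jbZ (m + n) ≤ jbZ m + jbZ n := by
  simp only [jbZ_eq_sqrt_one_add_norm_sq, Pi.add_apply, Int.cast_add]
  exact sqrt_one_add_norm_add_sq_le (WithLp.toLp 2 fun i => (m i : ℝ))
    (WithLp.toLp 2 fun i => (n i : ℝ))

lemma jbZ_preimage_Iic_subset (r : ℝ) :
    (jbZ ⁻¹' Iic r : Set (Fin d → ℤ)) ⊆
      (Finset.Icc (fun _ => -⌊r⌋) fun _ => ⌊r⌋ : Finset (Fin d → ℤ)) := by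
  intro m hm
  have hbound (i : Fin d) : -r ≤ m i ∧ (m i : ℝ) ≤ r := abs_le.1 ((abs_apply_le_jbZ m i).trans hm)
  refine Finset.mem_coe.2 (Finset.mem_Icc.2 ⟨fun i => ?_, fun i => Int.le_floor.2 (hbound i).2⟩)
  refine neg_le.1 (Int.le_floor.2 ?_)
  push_cast
  linarith [(hbound i).1]

lemma hasGrowthExponent_jbZ (d : ℕ) : HasGrowthExponent (jbZ (d := d)) d := by
  refine ⟨3 ^ d, fun r hr => ?_⟩
  rcases lt_or_ge r 1 with hr1 | hr1
  · have hempty : (jbZ ⁻¹' Iic r : Set (Fin d → ℤ)) = ∅ :=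
      eq_empty_of_forall_notMem fun m hm => (hr1.trans_le (one_le_jbZ m)).not_ge hm
    simp [hempty]
  have hside : ((⌊r⌋ + 1 - -⌊r⌋).toNat : ℝ) ≤ 3 * r := by
    have hfloor : 0 ≤ ⌊r⌋ := Int.floor_nonneg.2 hr.le
    rw [← Int.cast_natCast, Int.toNat_of_nonneg (by omega)]
    push_cast
    linarith [Int.floor_le r]
  calc ((jbZ ⁻¹' Iic r : Set (Fin d → ℤ)).encard : ℝ≥0∞)
      ≤ ((Finset.Icc (fun _ => -⌊r⌋) fun _ => ⌊r⌋ : Finset (Fin d → ℤ)).card : ℝ≥0∞) := by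
        rw [← ENat.toENNReal_coe, ← encard_coe_eq_coe_finsetCard]
        gcongr
        exact jbZ_preimage_Iic_subset r
    _ = ENNReal.ofReal (((⌊r⌋ + 1 - -⌊r⌋).toNat : ℝ) ^ d) := by
        rw [Pi.card_Icc]
        simp [ENNReal.ofReal_pow]
    _ ≤ ENNReal.ofReal ((3 * r) ^ d) := by gcongr
    _ = (3 ^ d : ℝ≥0) * ENNReal.ofReal (r ^ (d : ℝ)) := by
        rw [mul_pow, ENNReal.ofReal_mul (by positivity), Real.rpow_natCast]
        simp [ENNReal.ofReal_pow]

end JapaneseBracket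

/-- The `ℓ`-fold convolution bound `∑_{n = n₁ + ⋯ + n_ℓ} ∏ ⟨n_j⟩^{-2β}
≲ ⟨n⟩^{-d - 2ℓ(β - d/2)}` for `(ℓ-1)d/(2ℓ) < β < d/2`. -/
theorem iterated_convolution_bound (d l : ℕ) (hd : 1 ≤ d) (hl : 1 ≤ l) (β : ℝ)
    (h1 : ((l : ℝ) - 1) * d / (2 * l) < β) (h2 : β < (d : ℝ) / 2) :
    ∃ C > 0, ∀ n : Fin d → ℤ,
      (∑' v : Fin l → (Fin d → ℤ),
          if (∑ j, v j) = n then ∏ j, jbZ (v j) ^ (-(2 * β)) else 0)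
        ≤ C * jbZ n ^ (-(d : ℝ) - 2 * l * (β - (d : ℝ) / 2)) := by
  obtain ⟨C, hC, h⟩ := iterated_convolution_bound_general (hasGrowthExponent_jbZ d)
    (fun n => one_pos.trans_le (one_le_jbZ n)) jbZ_add_le hl h1 h2
  exact ⟨C, hC, fun n => (h n).2⟩
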